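/- Let k be a commutative ring with unity, N ≥ 2 an integer, and q ∈ k a primitive N-th root of unity. Then for every integer l with 1 ≤ l ≤ N−1 the q-binomial coefficient [N choose l] equals 0 in k. -/

import Mathlib

/-- The `q`-integer `[m] = 1 + q + ⋯ + q^{m-1}`. -/
def qInt {k : Type*} [CommRing k] (q : k) (m : ℕ) : k := ∑ i ∈ Finset.range m, q ^ i

/-- The `q`-factorial `[m]! = [m][m-1]⋯[1]`, with `[0]! = 1`. -/
def qFact {k : Type*} [CommRing k] (q : k) (m : ℕ) : k := ∏ i ∈ Finset.range m, qInt q (i + 1)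

/-- `QBinomSpec q N m l c` says that `c` is *the* `q`-binomial coefficient `[m choose l]`
(for `0 ≤ l ≤ m ≤ N`): in the special cases `(l,m) = (0,N), (N,N)` it is `1` by convention,
and otherwise it is characterized by `[l]! ⬝ [m-l]! ⬝ c = [m]!`. -/
def QBinomSpec {k : Type*} [CommRing k] (q : k) (N m l : ℕ) (c : k) : Prop :=
  ((m = N ∧ (l = 0 ∨ l = N)) → c = 1) ∧
  (¬(m = N ∧ (l = 0 ∨ l = N)) → qFact q l * qFact q (m - l) * c = qFact q m)

/-!
The `q`-binomial coefficient satisfies `[l]! [N-l]! [N choose l] = [N]!`. Since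
`[m] (q - 1) = q^m - 1`, each `[m]` with `0 < m < N` divides a non-zero-divisor, whereas `[N] = 0`
because `q - 1` can be cancelled. So the right-hand side vanishes, and on the left `[l]! [N-l]!`
can be cancelled.
-/

section

variable {k : Type*} [CommRing k] {q c : k} {N m l : ℕ}

theorem qInt_mul_sub_one (q : k) (m : ℕ) : qInt q m * (q - 1) = q ^ m - 1 :=
  geom_sum_mul q m

theorem qInt_mem_nonZeroDivisors (hm : q ^ m - 1 ∈ nonZeroDivisors k) :
    qInt q m ∈ nonZeroDivisors k := by
  rw [← qInt_mul_sub_one] at hm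
  exact (mul_mem_nonZeroDivisors.mp hm).1

theorem qInt_eq_zero_of_pow_eq_one (hq : q - 1 ∈ nonZeroDivisors k) (hm : q ^ m = 1) :
    qInt q m = 0 := by
  rw [← mul_right_mem_nonZeroDivisors_eq_zero_iff hq, qInt_mul_sub_one, hm, sub_self]

theorem qFact_mem_nonZeroDivisors
    (h : ∀ j, 0 < j → j ≤ m → qInt q j ∈ nonZeroDivisors k) :
    qFact q m ∈ nonZeroDivisors k :=
  Submonoid.prod_mem _ fun i hi => h (i + 1) i.succ_pos (Finset.mem_range.mp hi)

theorem qFact_eq_zero_of_qInt_eq_zero {j : ℕ} (hj : 0 < j) (hjm : j ≤ m) (h : qInt q j = 0) :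
    qFact q m = 0 := by
  obtain ⟨i, rfl⟩ := Nat.exists_eq_add_one.mpr hj
  exact Finset.prod_eq_zero (Finset.mem_range.mpr hjm) h

theorem QBinomSpec.qFact_mul_qFact_mul (hc : QBinomSpec q N m l c) (hl : l ≠ 0) (hlN : l ≠ N) :
    qFact q l * qFact q (m - l) * c = qFact q m :=
  hc.2 fun h => h.2.elim hl hlN

/-- For `q = 1` and `N = p` prime in characteristic `p`, this is the divisibility of the ordinary
binomial coefficient `p.choose l` by `p`. -/
theorem q_binom_N_eq_zero_general (hN : qInt q N = 0)
    (hlt : ∀ j, 0 < j → j < N → qInt q j ∈ nonZeroDivisors k)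
    (hl : 0 < l) (hlN : l < N) (hc : QBinomSpec q N N l c) :
    c = 0 := by
  have qFact_mem {m : ℕ} (hm : m < N) : qFact q m ∈ nonZeroDivisors k :=
    qFact_mem_nonZeroDivisors fun j hj hjm => hlt j hj (hjm.trans_lt hm)
  have denom_mem : qFact q l * qFact q (N - l) ∈ nonZeroDivisors k :=
    mul_mem (qFact_mem hlN) (qFact_mem (by omega))
  rw [← mul_left_mem_nonZeroDivisors_eq_zero_iff denom_mem,
    hc.qFact_mul_qFact_mul hl.ne' hlN.ne]
  exact qFact_eq_zero_of_qInt_eq_zero (hl.trans hlN) le_rfl hN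

end

/-- for `1 ≤ l ≤ N−1`, the q-binomial coefficient `[N choose l]` is `0`. -/
theorem q_binom_N_eq_zero
    {k : Type*} [CommRing k] (N : ℕ) (hN : 2 ≤ N) (q : k)
    (hq1 : q ^ N = 1)
    (hq2 : ∀ l : ℕ, 1 ≤ l → l ≤ N - 1 → q ^ l - 1 ∈ nonZeroDivisors k)
    (l : ℕ) (hl : 1 ≤ l) (hlN : l ≤ N - 1)
    (c : k) (hc : QBinomSpec q N N l c) :
    c = 0 := by
  have hq : q - 1 ∈ nonZeroDivisors k := by simpa only [pow_one] using hq2 1 le_rfl (by omega)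
  exact q_binom_N_eq_zero_general (qInt_eq_zero_of_pow_eq_one hq hq1)
    (fun j hj hjN => qInt_mem_nonZeroDivisors (hq2 j hj (by omega))) hl (by omega) hc
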